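/- arXiv:2305.06250 — 2 statements merged into one kernel-verified Lean document; each statement's English description precedes it below -/
import Mathlib

section
/- Let r₁ be the rank function of U^{123}_{2,3} and r₂ the rank function of U^{1}_{1,1} on N_4. For every positive integer k and every b ≥ 0, the function h = (log k)·r₁ + b·r₂ is an entropy function of degree 4. -/
open Finset

/-- Probability that the discrete random variable `Y` (on finite sample space `Ω`
with pmf `p`) takes the value `s`. -/
noncomputable def pr {Ω : Type} [Fintype Ω] {S : Type} [DecidableEq S]
    (p : Ω → ℝ) (Y : Ω → S) (s : S) : ℝ := ∑ ω, if Y ω = s then p ω else 0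

/-- Shannon entropy (base 2) of the discrete random variable `Y`. -/
noncomputable def ent {Ω : Type} [Fintype Ω] {S : Type} [DecidableEq S]
    (p : Ω → ℝ) (Y : Ω → S) : ℝ :=
  - ∑ s ∈ Finset.univ.image Y, pr p Y s * Real.logb 2 (pr p Y s)

/-- `h : 2^{N_n} → ℝ` is entropic: it is the entropy function of some random
vector `(X_1, …, X_n)` on finite alphabets. -/
def IsEntropic (n : ℕ) (h : Finset (Fin n) → ℝ) : Prop :=
  ∃ (m : Fin n → ℕ) (p : (∀ i, Fin (m i)) → ℝ),
    (∀ x, 0 ≤ p x) ∧ (∑ x, p x) = 1 ∧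
    ∀ A : Finset (Fin n), h A = ent p (fun x (i : A) => x i.1)

/-- Rank function of the matroid U^{B}_{k,|B|} on N₄ = {0,1,2,3}:
A ↦ min(k, |A ∩ B|); elements outside B are loops. -/
noncomputable def rkU (k : ℕ) (B : Finset (Fin 4)) (A : Finset (Fin 4)) : ℝ :=
  min (k : ℝ) ((A ∩ B).card : ℝ)

/-- Pointwise form of entropy. -/
lemma ent_pointwise {Ω : Type} [Fintype Ω] {S : Type} [DecidableEq S]
    (p : Ω → ℝ) (Y : Ω → S) :
    ent p Y = - ∑ ω, p ω * Real.logb 2 (pr p Y (Y ω)) := by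
  unfold ent
  congr 1
  rw [← Finset.sum_fiberwise_of_maps_to (s := Finset.univ) (t := Finset.univ.image Y) (g := Y)
    (fun ω _ => Finset.mem_image_of_mem _ (Finset.mem_univ ω))]
  refine Finset.sum_congr rfl fun s _ => ?_
  have h : ∀ ω ∈ Finset.univ.filter (fun ω => Y ω = s),
      p ω * Real.logb 2 (pr p Y (Y ω)) = p ω * Real.logb 2 (pr p Y s) := by
    intro ω hω
    rw [(Finset.mem_filter.1 hω).2]
  rw [Finset.sum_congr rfl h, ← Finset.sum_mul, Finset.sum_filter]
  rfl

/-- Sums against a push-forward. -/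
lemma sum_push {Ω Ω' : Type} [Fintype Ω] [Fintype Ω'] [DecidableEq Ω']
    (p : Ω → ℝ) (f : Ω → Ω') (g : Ω' → ℝ) :
    ∑ x, pr p f x * g x = ∑ ω, p ω * g (f ω) := by
  unfold pr
  simp_rw [Finset.sum_mul]
  rw [Finset.sum_comm]
  refine Finset.sum_congr rfl fun ω _ => ?_
  simp [ite_mul]

lemma ent_push {Ω Ω' S : Type} [Fintype Ω] [Fintype Ω'] [DecidableEq Ω'] [DecidableEq S]
    (p : Ω → ℝ) (f : Ω → Ω') (Y : Ω' → S) :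
    ent (pr p f) Y = - ∑ ω, p ω * Real.logb 2 (∑ ω', if Y (f ω') = Y (f ω) then p ω' else 0) := by
  have h : ∀ s, pr (pr p f) Y s = ∑ ω', if Y (f ω') = s then p ω' else 0 := by
    intro s
    have := sum_push p f (fun x => if Y x = s then 1 else 0)
    simpa [pr] using this
  rw [ent_pointwise, sum_push p f (fun x => Real.logb 2 (pr (pr p f) Y (Y x)))]
  simp_rw [h]

/-- A finite distribution with prescribed entropy. -/
lemma exists_dist (b : ℝ) (hb : 0 ≤ b) :
    ∃ (M : ℕ) (q : Fin M → ℝ), (∀ t, 0 ≤ q t) ∧ ∑ t, q t = 1 ∧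
      - ∑ t, q t * Real.logb 2 (q t) = b := by
  obtain ⟨N, hN⟩ := exists_nat_gt ((2:ℝ) ^ b)
  have hN1 : (1:ℝ) < N := lt_of_le_of_lt (Real.one_le_rpow (by norm_num) hb) hN
  have hN0 : (N:ℝ) ≠ 0 := by positivity
  have hNpos : 0 < N := by
    rcases Nat.eq_zero_or_pos N with h | h
    · simp [h] at hN0
    · exact h
  let z : Fin N := ⟨0, hNpos⟩
  let q : ℝ → Fin N → ℝ := fun s t => (1 - s) * (if t = z then 1 else 0) + s * (1 / N)
  let F : ℝ → ℝ := fun s => ∑ t, Real.negMulLog (q s t) / Real.log 2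
  have hF : Continuous F := by
    refine continuous_finsetSum _ fun t _ => Continuous.div_const ?_ _
    refine Real.continuous_negMulLog.comp ?_
    fun_prop
  have h0 : F 0 = 0 := by
    refine Finset.sum_eq_zero fun t _ => ?_
    by_cases h : t = z <;> simp [q, h]
  have h1 : F 1 = Real.logb 2 N := by
    simp only [F, q, Real.negMulLog, Real.logb]
    simp
    field_simp
  have hbN : b ≤ Real.logb 2 N := by
    rw [Real.le_logb_iff_rpow_le (by norm_num) (by positivity)]
    exact hN.le
  have := intermediate_value_Icc (zero_le_one' ℝ) hF.continuousOn
  obtain ⟨s, hs, hsb⟩ := this (show b ∈ Set.Icc (F 0) (F 1) by rw [h0, h1]; exact ⟨hb, hbN⟩)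
  refine ⟨N, q s, ?_, ?_, ?_⟩
  · intro t
    have h2 : 0 ≤ 1 - s := by linarith [hs.2]
    have h3 := hs.1
    simp only [q]
    split_ifs <;> positivity
  · simp only [q]
    rw [Finset.sum_add_distrib, ← Finset.mul_sum]
    simp
    field_simp
    ring
  · rw [← hsb, ← Finset.sum_neg_distrib]
    refine Finset.sum_congr rfl fun t _ => ?_
    simp only [Real.negMulLog, Real.logb]
    ring

lemma card012 : ∀ A : Finset (Fin 4), (A ∩ {0,1,2}).card =
    (if 0 ∈ A then 1 else 0) + (if 1 ∈ A then 1 else 0) + (if 2 ∈ A then 1 else 0) := by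
  decide

lemma card0 : ∀ A : Finset (Fin 4), (A ∩ {0}).card = (if 0 ∈ A then 1 else 0) := by
  decide

/-- The random vector of the construction. -/
def vec (k M : ℕ) [NeZero k] (ω : Fin k × Fin k × Fin M) :
    ∀ i : Fin 4, Fin ((![k * M, k, k, 1] : Fin 4 → ℕ) i) :=
  fun i => match i with
  | 0 => (finProdFinEquiv (ω.1, ω.2.2) : Fin (k * M))
  | 1 => (ω.2.1 : Fin k)
  | 2 => (ω.1 + ω.2.1 : Fin k)
  | 3 => (0 : Fin 1)

lemma vec_eq_iff (k M : ℕ) [NeZero k] (A : Finset (Fin 4)) (ω' ω : Fin k × Fin k × Fin M) :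
    ((fun (i : A) => vec k M ω' i.1) = (fun (i : A) => vec k M ω i.1)) ↔
      (0 ∈ A → ω'.1 = ω.1 ∧ ω'.2.2 = ω.2.2) ∧ (1 ∈ A → ω'.2.1 = ω.2.1) ∧
      (2 ∈ A → ω'.1 + ω'.2.1 = ω.1 + ω.2.1) := by
  have e0 : vec k M ω' 0 = vec k M ω 0 ↔ ω'.1 = ω.1 ∧ ω'.2.2 = ω.2.2 := by
    have : vec k M ω' 0 = vec k M ω 0 ↔ 
      (finProdFinEquiv (ω'.1, ω'.2.2) : Fin (k * M)) = finProdFinEquiv (ω.1, ω.2.2) := Iff.rfl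
    rw [this, finProdFinEquiv.apply_eq_iff_eq, Prod.mk.injEq]
  have e1 : vec k M ω' 1 = vec k M ω 1 ↔ ω'.2.1 = ω.2.1 := Iff.rfl
  have e2 : vec k M ω' 2 = vec k M ω 2 ↔ ω'.1 + ω'.2.1 = ω.1 + ω.2.1 := Iff.rfl
  have e3 : vec k M ω' 3 = vec k M ω 3 := rfl
  rw [← e0, ← e1, ← e2, funext_iff]
  constructor
  · intro h
    exact ⟨fun h0 => h ⟨0, h0⟩, fun h0 => h ⟨1, h0⟩, fun h0 => h ⟨2, h0⟩⟩
  · rintro ⟨h0, h1, h2⟩ ⟨i, hi⟩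
    fin_cases i
    · exact h0 hi
    · exact h1 hi
    · exact h2 hi
    · exact e3

lemma inner_vec_sum (k M : ℕ) [NeZero k] (q : Fin M → ℝ) (hq : ∑ t, q t = 1)
    (c0 c1 c2 : Prop) [Decidable c0] [Decidable c1] [Decidable c2] (x y : Fin k) (t : Fin M) :
    (∑ ω' : Fin k × Fin k × Fin M, if (c0 → ω'.1 = x ∧ ω'.2.2 = t) ∧ (c1 → ω'.2.1 = y) ∧
      (c2 → ω'.1 + ω'.2.1 = x + y) then q ω'.2.2 / (k:ℝ)^2 else 0) =
    ((k:ℝ)⁻¹) ^ (min 2 ((if c0 then 1 else 0) + (if c1 then 1 else 0) + (if c2 then 1 else 0)))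
      * (if c0 then q t else 1) := by
  have hk : (k:ℝ) ≠ 0 := by exact_mod_cast NeZero.ne k
  have key : ∀ x' y' : Fin k, x' + y' = x + y ↔ y' = x + y - x' := by
    intro x' y'
    rw [eq_sub_iff_add_eq, add_comm]
  have key1 : ∀ x' : Fin k, y = x + y - x' ↔ x' = x := by
    intro x'
    rw [← key, add_left_inj]
  rw [Fintype.sum_prod_type]
  simp_rw [Fintype.sum_prod_type]
  by_cases h0 : c0 <;> by_cases h1 : c1 <;> by_cases h2 : c2 <;>
    simp [h0, h1, h2, key, key1, ite_and, ← Finset.sum_div, hq, Finset.sum_ite_irrel]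
  all_goals field_simp

/-- For every positive integer k and every b ≥ 0, the function
h = (log₂ k)·r(U^{123}_{2,3}) + b·r(U^{1}_{1,1}) is entropic. (If part of
Theorem 3 for the face (U^{123}_{2,3}, U^{1}_{1,1}).) -/
theorem face_U123_23_U1_11_if (k : ℕ) (hk : 0 < k) (b : ℝ) (hb : 0 ≤ b) :
    IsEntropic 4
      (fun A => Real.logb 2 k * rkU 2 ({0,1,2} : Finset (Fin 4)) A +
                b * rkU 1 ({0} : Finset (Fin 4)) A) := by
  obtain ⟨M, q, hq0, hq1, hqb⟩ := exists_dist b hb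
  haveI : NeZero k := ⟨hk.ne'⟩
  have hk0 : (k:ℝ) ≠ 0 := by exact_mod_cast hk.ne'
  let p : Fin k × Fin k × Fin M → ℝ := fun ω => q ω.2.2 / (k:ℝ)^2
  have hp0 : ∀ ω, 0 ≤ p ω := fun ω => div_nonneg (hq0 _) (by positivity)
  have hsum : ∀ g : Fin M → ℝ, ∑ ω : Fin k × Fin k × Fin M, g ω.2.2 / (k:ℝ)^2 = ∑ t, g t := by
    intro g
    rw [Fintype.sum_prod_type]
    simp_rw [Fintype.sum_prod_type]
    simp [← Finset.sum_div]
    field_simp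
  refine ⟨![k * M, k, k, 1], pr p (vec k M), ?_, ?_, ?_⟩
  · intro x
    refine Finset.sum_nonneg fun ω _ => ?_
    split_ifs
    · exact hp0 ω
    · exact le_rfl
  · have := sum_push p (vec k M) (fun _ => 1)
    simp only [mul_one] at this
    rw [this, hsum, hq1]
  · intro A
    rw [ent_push]
    simp_rw [vec_eq_iff]
    simp only [p]
    simp_rw [inner_vec_sum k M q hq1 (0 ∈ A) (1 ∈ A) (2 ∈ A), ← card012 A]
    have hr1 : rkU 2 {0,1,2} A = ((min 2 (A ∩ {0,1,2}).card : ℕ) : ℝ) := by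
      simp [rkU]
    have hr2 : rkU 1 {0} A = if 0 ∈ A then 1 else 0 := by
      rw [rkU, card0]
      split_ifs <;> simp
    rw [hr1, hr2]
    generalize min 2 (A ∩ {0,1,2}).card = r
    have hterm : ∀ ω : Fin k × Fin k × Fin M,
        q ω.2.2 / (k:ℝ)^2 * Real.logb 2 (((k:ℝ)⁻¹) ^ r * (if 0 ∈ A then q ω.2.2 else 1)) =
        (q ω.2.2 * (-(r * Real.logb 2 k)) +
          (if 0 ∈ A then 1 else 0) * (q ω.2.2 * Real.logb 2 (q ω.2.2))) / (k:ℝ)^2 := by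
      intro ω
      by_cases hz : q ω.2.2 = 0
      · simp [hz]
      · have hne : (if 0 ∈ A then q ω.2.2 else 1) ≠ 0 := by
          split_ifs
          · exact hz
          · exact one_ne_zero
        rw [Real.logb_mul (by positivity) hne, Real.logb_pow, Real.logb_inv]
        split_ifs
        · ring
        · simp
          ring
    rw [Finset.sum_congr rfl fun ω _ => hterm ω,
      hsum (fun t => q t * (-(r * Real.logb 2 k)) +
          (if 0 ∈ A then 1 else 0) * (q t * Real.logb 2 (q t))),
      Finset.sum_add_distrib, ← Finset.sum_mul, ← Finset.mul_sum, hq1, ← hqb]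
    ring
end

section
/- Let h = a·r₁ + b·r₂ where r₁ is the rank function of U^{123}_{2,3} and r₂ that of U^{12}_{1,2} on N_4, with a, b ≥ 0. Then h is entropic if and only if a + b ≥ log⌈2^a⌉. -/
open Finset

section helpers

variable {Ω : Type} [Fintype Ω] {S T R : Type} [DecidableEq S] [DecidableEq T] [DecidableEq R]

lemma aux_sum_pr [Fintype S] (p : Ω → ℝ) (Y : Ω → S) (F : S → ℝ) :
    ∑ s, pr p Y s * F s = ∑ ω, p ω * F (Y ω) := by
  unfold pr
  simp_rw [Finset.sum_mul]
  rw [Finset.sum_comm]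
  refine Finset.sum_congr rfl fun ω _ => ?_
  simp [ite_mul]

lemma aux_ent_eq (p : Ω → ℝ) (Y : Ω → S) :
    ent p Y = - ∑ ω, p ω * Real.logb 2 (pr p Y (Y ω)) := by
  unfold ent
  congr 1
  rw [← Finset.sum_fiberwise_of_maps_to (s := Finset.univ) (t := Finset.univ.image Y) (g := Y)
    (fun ω _ => Finset.mem_image_of_mem _ (Finset.mem_univ ω))]
  refine Finset.sum_congr rfl fun s _ => ?_
  conv_lhs => unfold pr
  rw [← Finset.sum_filter, Finset.sum_mul]
  refine Finset.sum_congr rfl fun ω hω => ?_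
  rw [(Finset.mem_filter.1 hω).2, Finset.sum_filter]
  rfl

lemma aux_ent_congr (p : Ω → ℝ) (Y : Ω → S) (Z : Ω → T)
    (h : ∀ ω ω', Y ω = Y ω' ↔ Z ω = Z ω') : ent p Y = ent p Z := by
  rw [aux_ent_eq, aux_ent_eq]
  unfold pr
  simp_rw [h]

lemma aux_ent_push [Fintype S] (q : Ω → ℝ) (Y : Ω → S) (Z : S → T) :
    ent (pr q Y) Z = ent q (fun ω => Z (Y ω)) := by
  have h : ∀ t, pr (pr q Y) Z t = pr q (fun ω => Z (Y ω)) t := by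
    intro t
    have := aux_sum_pr q Y (fun s => if Z s = t then 1 else 0)
    simpa [pr] using this
  rw [aux_ent_eq, aux_ent_eq]
  simp_rw [h]
  rw [aux_sum_pr q Y (fun s => Real.logb 2 (pr q (fun ω => Z (Y ω)) (Z s)))]

lemma aux_pr_nonneg (p : Ω → ℝ) (hp : ∀ x, 0 ≤ p x) (Y : Ω → S) (s : S) : 0 ≤ pr p Y s := by
  unfold pr
  exact Finset.sum_nonneg fun ω _ => by split_ifs <;> simp [hp]

lemma aux_le_pr (p : Ω → ℝ) (hp : ∀ x, 0 ≤ p x) (Y : Ω → S) (ω : Ω) : p ω ≤ pr p Y (Y ω) := by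
  unfold pr
  have := Finset.single_le_sum (f := fun ω' => if Y ω' = Y ω then p ω' else 0)
    (fun ω _ => by split_ifs <;> simp [hp]) (Finset.mem_univ ω)
  simpa using this

lemma aux_pr_sum [Fintype S] (p : Ω → ℝ) (Y : Ω → S) : ∑ s, pr p Y s = ∑ ω, p ω := by
  simpa using aux_sum_pr p Y (fun _ => 1)

lemma aux_exists_of_pr_pos (p : Ω → ℝ) (Y : Ω → S) (s : S) (h : 0 < pr p Y s) :
    ∃ ω, Y ω = s ∧ 0 < p ω := by
  unfold pr at h
  obtain ⟨ω, -, h⟩ := Finset.exists_lt_of_sum_lt (s := Finset.univ) (f := fun _ : Ω => (0 : ℝ))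
    (by simpa using h)
  refine ⟨ω, ?_⟩
  split_ifs at h with h1
  · exact ⟨h1, h⟩
  · exact absurd h (lt_irrefl _)

/-- `Z` refines `Y` with equal entropies: atoms agree on the support. -/
lemma aux_det (p : Ω → ℝ) (hp : ∀ x, 0 ≤ p x) (Y : Ω → S) (Z : Ω → T)
    (h : ∀ ω ω', Z ω = Z ω' → Y ω = Y ω') (he : ent p Y = ent p Z) (ω : Ω) (hω : 0 < p ω) :
    pr p Y (Y ω) = pr p Z (Z ω) := by
  have hle : ∀ ω, pr p Z (Z ω) ≤ pr p Y (Y ω) := by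
    intro ω
    unfold pr
    refine Finset.sum_le_sum fun ω' _ => ?_
    by_cases h1 : Z ω' = Z ω
    · simp [h1, h _ _ h1]
    · simp only [h1, if_false]; split_ifs <;> simp [hp]
  have hnn : ∀ ω ∈ Finset.univ, 0 ≤ p ω * (Real.logb 2 (pr p Y (Y ω)) - Real.logb 2 (pr p Z (Z ω))) := by
    intro ω _
    rcases (hp ω).eq_or_lt with h0 | h0
    · simp [← h0]
    · refine mul_nonneg h0.le (sub_nonneg.2 ?_)
      exact Real.logb_le_logb_of_le (by norm_num) (h0.trans_le (aux_le_pr p hp Z ω)) (hle ω)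
  have hs : ∑ ω, p ω * (Real.logb 2 (pr p Y (Y ω)) - Real.logb 2 (pr p Z (Z ω))) = 0 := by
    simp_rw [mul_sub]
    rw [Finset.sum_sub_distrib]
    rw [aux_ent_eq, aux_ent_eq] at he
    linarith
  have := (Finset.sum_eq_zero_iff_of_nonneg hnn).1 hs ω (Finset.mem_univ _)
  have h2 : Real.logb 2 (pr p Y (Y ω)) = Real.logb 2 (pr p Z (Z ω)) := by
    rcases mul_eq_zero.1 this with h | h <;> linarith
  exact Real.logb_injOn_pos (by norm_num) (hω.trans_le (aux_le_pr p hp Y ω))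
    (hω.trans_le (aux_le_pr p hp Z ω)) h2

lemma aux_gibbs_term (x y : ℝ) (hx : 0 ≤ x) (hy : 0 ≤ y) (hxy : 0 < x → 0 < y) :
    x * (Real.log y - Real.log x) ≤ y - x ∧
      (x * (Real.log y - Real.log x) = y - x → x = y) := by
  rcases hx.eq_or_lt with h0 | h0
  · subst h0
    simp only [zero_mul, sub_zero]
    exact ⟨hy, fun h => h⟩
  · have hy0 := hxy h0
    have hd : 0 < y / x := div_pos hy0 h0
    have e1 : y - x = x * (y / x - 1) := by field_simp
    rw [← Real.log_div hy0.ne' h0.ne', e1]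
    refine ⟨mul_le_mul_of_nonneg_left (Real.log_le_sub_one_of_pos hd) h0.le, fun h => ?_⟩
    by_contra hne
    have : y / x ≠ 1 := fun h => hne (by rw [div_eq_one_iff_eq h0.ne'] at h; exact h.symm)
    have := Real.log_lt_sub_one_of_pos hd this
    have := mul_lt_mul_of_pos_left this h0
    linarith

lemma aux_indep [Fintype S] [Fintype T] (p : Ω → ℝ) (hp : ∀ x, 0 ≤ p x) (h1 : ∑ x, p x = 1)
    (Y : Ω → S) (Z : Ω → T)
    (he : ent p (fun ω => (Y ω, Z ω)) = ent p Y + ent p Z) (s : S) (t : T) :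
    pr p (fun ω => (Y ω, Z ω)) (s, t) = pr p Y s * pr p Z t := by
  set W : Ω → S × T := fun ω => (Y ω, Z ω) with hW
  have hpos : ∀ st : S × T, 0 < pr p W st → 0 < pr p Y st.1 * pr p Z st.2 := by
    intro st h
    obtain ⟨ω, rfl, h0⟩ := aux_exists_of_pr_pos p W st h
    exact mul_pos (h0.trans_le (aux_le_pr p hp Y ω)) (h0.trans_le (aux_le_pr p hp Z ω))
  have hg := fun st : S × T => aux_gibbs_term (pr p W st) (pr p Y st.1 * pr p Z st.2)
    (aux_pr_nonneg p hp W st) (mul_nonneg (aux_pr_nonneg p hp Y _) (aux_pr_nonneg p hp Z _)) (hpos st)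
  have hR : ∑ st : S × T, (pr p Y st.1 * pr p Z st.2 - pr p W st) = 0 := by
    rw [Finset.sum_sub_distrib, aux_pr_sum, h1, Fintype.sum_prod_type]
    simp only
    simp_rw [← Finset.mul_sum, aux_pr_sum, h1]
    simp [aux_pr_sum, h1]
  have hL : ∑ st : S × T, pr p W st *
      (Real.log (pr p Y st.1 * pr p Z st.2) - Real.log (pr p W st)) = 0 := by
    rw [aux_sum_pr p W (fun st => Real.log (pr p Y st.1 * pr p Z st.2) - Real.log (pr p W st))]
    rw [aux_ent_eq, aux_ent_eq, aux_ent_eq] at he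
    have hl : Real.log 2 ≠ 0 := (Real.log_pos (by norm_num)).ne'
    simp_rw [Real.logb, mul_div_assoc', ← Finset.sum_div] at he
    have he' : ∑ ω, p ω * Real.log (pr p W (W ω)) = ∑ ω, p ω * Real.log (pr p Y (Y ω)) +
        ∑ ω, p ω * Real.log (pr p Z (Z ω)) := by
      field_simp at he
      linarith
    have hterm : ∀ ω, p ω * (Real.log (pr p Y (W ω).1 * pr p Z (W ω).2) - Real.log (pr p W (W ω)))
        = p ω * Real.log (pr p Y (Y ω)) + p ω * Real.log (pr p Z (Z ω))
          - p ω * Real.log (pr p W (W ω)) := by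
      intro ω
      rcases (hp ω).eq_or_lt with h0 | h0
      · simp [← h0]
      · rw [Real.log_mul (h0.trans_le (aux_le_pr p hp Y ω)).ne'
          (h0.trans_le (aux_le_pr p hp Z ω)).ne']
        ring
    rw [Finset.sum_congr rfl (fun ω _ => hterm ω), Finset.sum_sub_distrib, Finset.sum_add_distrib,
      he']
    ring
  have hall := (Finset.sum_eq_sum_iff_of_le (fun st _ => (hg st).1)).1 (hL.trans hR.symm)
  exact (hg (s, t)).2 (hall (s, t) (Finset.mem_univ _))

/-- The support of a variable of entropy `a` has at least `2^a` elements. -/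
lemma aux_max_ent [Fintype S] (p : Ω → ℝ) (hp : ∀ x, 0 ≤ p x) (h1 : ∑ x, p x = 1) (Y : Ω → S)
    (N : ℕ) (hN : N = (Finset.univ.filter fun s => 0 < pr p Y s).card) :
    0 < N ∧ ent p Y ≤ Real.logb 2 N := by
  have hsum : ∑ s ∈ Finset.univ.filter (fun s => 0 < pr p Y s), pr p Y s = 1 := by
    rw [← h1, ← aux_pr_sum p Y, Finset.sum_filter]
    refine Finset.sum_congr rfl fun s _ => ?_
    split_ifs with h
    · rfl
    · exact le_antisymm (aux_pr_nonneg p hp Y s) (not_lt.1 h)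
  have hN0 : 0 < N := by
    rw [hN, Finset.card_pos]
    by_contra h
    rw [Finset.not_nonempty_iff_eq_empty] at h
    rw [h] at hsum
    simp at hsum
  refine ⟨hN0, ?_⟩
  have hNR : (0 : ℝ) < N := by exact_mod_cast hN0
  have hl : 0 < Real.log 2 := Real.log_pos (by norm_num)
  have key : ∑ s ∈ Finset.univ.filter (fun s => 0 < pr p Y s),
      pr p Y s * (Real.log (1 / N) - Real.log (pr p Y s)) ≤ 0 := by
    calc _ ≤ ∑ s ∈ Finset.univ.filter (fun s => 0 < pr p Y s), ((1 / N : ℝ) - pr p Y s) :=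
          Finset.sum_le_sum fun s _ => (aux_gibbs_term _ (1 / N) (aux_pr_nonneg p hp Y s)
            (by positivity) (fun _ => by positivity)).1
      _ = 0 := by
          rw [Finset.sum_sub_distrib, hsum, Finset.sum_const, ← hN]
          simp [hNR.ne']
  have e2 : ∑ s ∈ Finset.univ.filter (fun s => 0 < pr p Y s), pr p Y s * Real.log (pr p Y s)
      = ∑ ω, p ω * Real.log (pr p Y (Y ω)) := by
    rw [← aux_sum_pr p Y (fun s => Real.log (pr p Y s)), Finset.sum_filter]
    refine Finset.sum_congr rfl fun s _ => ?_
    split_ifs with h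
    · rfl
    · rw [le_antisymm (not_lt.1 h) (aux_pr_nonneg p hp Y s)]; simp
  simp_rw [mul_sub] at key
  rw [Finset.sum_sub_distrib, ← Finset.sum_mul, hsum, e2, one_div, Real.log_inv] at key
  rw [aux_ent_eq]
  simp_rw [Real.logb, mul_div_assoc', ← Finset.sum_div]
  rw [← neg_div]
  gcongr
  linarith

lemma aux_necessity [Fintype S] [Fintype T] [Fintype R] (p : Ω → ℝ) (hp : ∀ x, 0 ≤ p x)
    (h1 : ∑ x, p x = 1) (X : Ω → S) (Y : Ω → T) (Z : Ω → R) (a b : ℝ)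
    (eX : ent p X = a + b) (eY : ent p Y = a + b) (eZ : ent p Z = a)
    (eXY : ent p (fun ω => (X ω, Y ω)) = 2 * a + b)
    (eXZ : ent p (fun ω => (X ω, Z ω)) = 2 * a + b)
    (eYZ : ent p (fun ω => (Y ω, Z ω)) = 2 * a + b)
    (eXYZ : ent p (fun ω => (X ω, Y ω, Z ω)) = 2 * a + b) :
    Real.logb 2 ((⌈(2 : ℝ) ^ a⌉ : ℤ) : ℝ) ≤ a + b := by
  set N := (Finset.univ.filter fun s => 0 < pr p Z s).card with hN
  obtain ⟨hN0, hNa⟩ := aux_max_ent p hp h1 Z N hN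
  have hNR : (0 : ℝ) < N := by exact_mod_cast hN0
  have iXZ := aux_indep p hp h1 X Z (by rw [eXZ, eX, eZ]; ring)
  have iYZ := aux_indep p hp h1 Y Z (by rw [eYZ, eY, eZ]; ring)
  have dXY := aux_det p hp (fun ω => (X ω, Y ω)) (fun ω => (X ω, Y ω, Z ω))
    (by simp +contextual) (by rw [eXY, eXYZ])
  have dXZ := aux_det p hp (fun ω => (X ω, Z ω)) (fun ω => (X ω, Y ω, Z ω))
    (by simp +contextual) (by rw [eXZ, eXYZ])
  have dYZ := aux_det p hp (fun ω => (Y ω, Z ω)) (fun ω => (X ω, Y ω, Z ω))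
    (by simp +contextual) (by rw [eYZ, eXYZ])
  have hb : ∀ ω, 0 < p ω → pr p X (X ω) ≤ 1 / N := by
    intro ω hω
    have hx := hω.trans_le (aux_le_pr p hp X ω)
    have hex : ∀ r, 0 < pr p Z r → ∃ ω', (X ω', Z ω') = (X ω, r) ∧ 0 < p ω' := by
      intro r hr
      refine aux_exists_of_pr_pos p (fun ω => (X ω, Z ω)) (X ω, r) ?_
      rw [iXZ]
      exact mul_pos hx hr
    have : Nonempty Ω := ⟨ω⟩
    choose! g hg using hex
    have hY : ∀ r, 0 < pr p Z r → pr p Y (Y (g r)) = pr p X (X ω) := by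
      intro r hr
      obtain ⟨h2, h3⟩ := hg r hr
      rw [Prod.mk.injEq] at h2
      have e := (dYZ _ h3).trans (dXZ _ h3).symm
      rw [iYZ, iXZ, h2.1, h2.2] at e
      exact mul_right_cancel₀ hr.ne' e
    have hinj : ∀ r ∈ Finset.univ.filter (fun s => 0 < pr p Z s),
        ∀ r' ∈ Finset.univ.filter (fun s => 0 < pr p Z s), Y (g r) = Y (g r') → r = r' := by
      intro r hr r' hr' hYY
      simp only [Finset.mem_filter, Finset.mem_univ, true_and] at hr hr'
      obtain ⟨h2, h3⟩ := hg r hr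
      obtain ⟨h2', h3'⟩ := hg r' hr'
      rw [Prod.mk.injEq] at h2 h2'
      by_contra hne
      have e := dXY _ h3
      refine absurd e (ne_of_gt ?_)
      unfold pr
      refine Finset.sum_lt_sum (fun ω' _ => ?_) ⟨g r', Finset.mem_univ _, ?_⟩
      · simp only [Prod.mk.injEq]
        by_cases hh : X ω' = X (g r) ∧ Y ω' = Y (g r) ∧ Z ω' = Z (g r)
        · rw [if_pos hh, if_pos ⟨hh.1, hh.2.1⟩]
        · rw [if_neg hh]; split_ifs <;> simp [hp]
      · simp only [Prod.mk.injEq]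
        rw [if_neg, if_pos]
        · exact h3'
        · exact ⟨h2'.1.trans h2.1.symm, hYY.symm⟩
        · rintro ⟨-, -, h⟩
          exact hne (by rw [← h2.2, ← h2'.2, h])
    have hs : ∑ r ∈ Finset.univ.filter (fun s => 0 < pr p Z s), pr p Y (Y (g r)) ≤ 1 := by
      rw [← Finset.sum_image (f := fun t => pr p Y t) (g := fun r => Y (g r)) hinj, ← h1,
        ← aux_pr_sum p Y]
      exact Finset.sum_le_sum_of_subset_of_nonneg (Finset.subset_univ _)
        (fun t _ _ => aux_pr_nonneg p hp Y t)
    rw [Finset.sum_congr rfl (fun r hr => hY r (Finset.mem_filter.1 hr).2), Finset.sum_const,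
      ← hN, nsmul_eq_mul] at hs
    rw [le_div_iff₀ hNR]
    linarith
  have hfin : Real.logb 2 N ≤ a + b := by
    rw [← eX, aux_ent_eq, ← Finset.sum_neg_distrib, ← one_mul (Real.logb 2 N), ← h1, Finset.sum_mul]
    refine Finset.sum_le_sum fun ω _ => ?_
    rcases (hp ω).eq_or_lt with h0 | h0
    · simp [← h0]
    · rw [← mul_neg]
      refine mul_le_mul_of_nonneg_left ?_ h0.le
      have := Real.logb_le_logb_of_le (b := 2) (by norm_num) (h0.trans_le (aux_le_pr p hp X ω)) (hb ω h0)
      rw [one_div, Real.logb_inv] at this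
      linarith
  refine le_trans ?_ hfin
  rw [eZ] at hNa
  have h2 : (2 : ℝ) ^ a ≤ N := by
    rwa [Real.le_logb_iff_rpow_le (by norm_num) hNR] at hNa
  have h3 : ⌈(2 : ℝ) ^ a⌉ ≤ (N : ℤ) := Int.ceil_le.2 (by exact_mod_cast h2)
  refine Real.logb_le_logb_of_le (by norm_num) ?_ (by exact_mod_cast h3)
  have : 0 < ⌈(2 : ℝ) ^ a⌉ := Int.ceil_pos.2 (by positivity)
  exact_mod_cast this

end helpers

lemma aux_exists_dist (ι : Type) [Fintype ι] [DecidableEq ι] (i0 : ι) (n : ℕ)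
    (hn : Fintype.card ι = n) (c : ℝ) (hc : 0 ≤ c) (hc' : c ≤ Real.logb 2 n) :
    ∃ q : ι → ℝ, (∀ i, 0 ≤ q i) ∧ ∑ i, q i = 1 ∧ - ∑ i, q i * Real.logb 2 (q i) = c := by
  have hnR : (0 : ℝ) < n := by rw [← hn]; exact_mod_cast Fintype.card_pos_iff.2 ⟨i0⟩
  let f : ℝ → ι → ℝ := fun t i => t / n + (1 - t) * (if i = i0 then 1 else 0)
  have hcont : Continuous fun t => - ∑ i, f t i * Real.logb 2 (f t i) := by
    refine (continuous_finsetSum _ fun i _ => ?_).neg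
    have h1 : Continuous fun t => f t i := by
      simp only [f]
      fun_prop
    have := (Real.continuous_mul_log.comp h1).div_const (Real.log 2)
    simpa [Real.logb, mul_div_assoc] using this
  have h0 : - ∑ i, f 0 i * Real.logb 2 (f 0 i) = 0 := by
    simp [f]
  have h1 : - ∑ i, f 1 i * Real.logb 2 (f 1 i) = Real.logb 2 n := by
    simp [f, hn, hnR.ne']
  obtain ⟨t, ht, htc⟩ := intermediate_value_Icc (zero_le_one' ℝ) hcont.continuousOn
    (show c ∈ Set.Icc _ _ by
      rw [h0, h1]; exact ⟨hc, hc'⟩)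
  refine ⟨f t, fun i => ?_, ?_, htc⟩
  · have : 0 ≤ 1 - t := by linarith [ht.2]
    have := ht.1
    simp only [f]
    split_ifs <;> positivity
  · simp only [f]
    rw [Finset.sum_add_distrib, ← Finset.mul_sum]
    simp [hn]
    field_simp
    ring

lemma aux_entropic {Ω : Type} [Fintype Ω] [DecidableEq Ω] (k : ℕ) (q : Ω → ℝ) (hq : ∀ x, 0 ≤ q x)
    (h1 : ∑ x, q x = 1) (Y : Fin k → Ω → Ω) (h : Finset (Fin k) → ℝ)
    (hh : ∀ A : Finset (Fin k), h A = ent q (fun ω (i : A) => Y i.1 ω)) : IsEntropic k h := by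
  let e := Fintype.equivFin Ω
  let V : Ω → (∀ _ : Fin k, Fin (Fintype.card Ω)) := fun ω i => e (Y i ω)
  refine ⟨fun _ => Fintype.card Ω, pr q V, aux_pr_nonneg q hq V, ?_, fun A => ?_⟩
  · rw [aux_pr_sum, h1]
  · rw [hh, aux_ent_push q V (fun x (i : A) => x i.1)]
    refine aux_ent_congr _ _ _ fun ω ω' => ?_
    simp [funext_iff, V]

section construction

variable {G K : Type} [Fintype G] [DecidableEq G] [AddCommGroup G] [Fintype K] [DecidableEq K]

noncomputable def auxq (n : ℕ) (q₁ : G → ℝ) (q₂ : K → ℝ) : G × G × K → ℝ :=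
  fun x => (1 / n : ℝ) * q₁ x.2.1 * q₂ x.2.2

lemma auxq_sum (n : ℕ) (hn : Fintype.card G = n) (q₁ : G → ℝ) (q₂ : K → ℝ)
    (F : G → K → ℝ) :
    ∑ x, auxq n q₁ q₂ x * F x.2.1 x.2.2 = ∑ v, ∑ w, q₁ v * q₂ w * F v w := by
  have hnR : (n : ℝ) ≠ 0 := by
    rw [← hn]; exact_mod_cast Fintype.card_ne_zero
  unfold auxq
  rw [Fintype.sum_prod_type]
  simp only [Finset.sum_const, Finset.card_univ, hn, nsmul_eq_mul]
  rw [Fintype.sum_prod_type, Finset.mul_sum]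
  refine Finset.sum_congr rfl fun v _ => ?_
  rw [Finset.mul_sum]
  refine Finset.sum_congr rfl fun w _ => ?_
  field_simp

lemma auxq_ents (n : ℕ) (hn : Fintype.card G = n) (q₁ : G → ℝ) (q₂ : K → ℝ)
    (s1 : ∑ v, q₁ v = 1) (s2 : ∑ w, q₂ w = 1) (a c : ℝ)
    (e1 : - ∑ i, q₁ i * Real.logb 2 (q₁ i) = a) (e2 : - ∑ i, q₂ i * Real.logb 2 (q₂ i) = c) :
    ∑ x : G × G × K, auxq n q₁ q₂ x = 1 ∧
    ent (auxq n q₁ q₂) (fun x : G × G × K => x) = Real.logb 2 n + a + c ∧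
    ent (auxq n q₁ q₂) (fun x : G × G × K => (x.1, x.2.2)) = Real.logb 2 n + c ∧
    ent (auxq n q₁ q₂) (fun x : G × G × K => (x.1 + x.2.1, x.2.2)) = Real.logb 2 n + c ∧
    ent (auxq n q₁ q₂) (fun x : G × G × K => x.2.1) = a ∧
    ent (auxq n q₁ q₂) (fun _ : G × G × K => ()) = 0 := by
  have hnR : (n : ℝ) ≠ 0 := by
    rw [← hn]; exact_mod_cast Fintype.card_ne_zero
  have S1 : ∑ x : G × G × K, auxq n q₁ q₂ x = 1 := by
    have := auxq_sum n hn q₁ q₂ (fun _ _ => 1)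
    simp only [mul_one, ← Finset.mul_sum, s2, s1] at this
    exact this
  have Sv : ∑ x : G × G × K, auxq n q₁ q₂ x * Real.logb 2 (q₁ x.2.1) = -a := by
    rw [auxq_sum n hn q₁ q₂ (fun v _ => Real.logb 2 (q₁ v)), ← e1, neg_neg]
    refine Finset.sum_congr rfl fun v _ => ?_
    rw [← Finset.sum_mul, ← Finset.mul_sum, s2, mul_one]
  have Sw : ∑ x : G × G × K, auxq n q₁ q₂ x * Real.logb 2 (q₂ x.2.2) = -c := by
    rw [auxq_sum n hn q₁ q₂ (fun _ w => Real.logb 2 (q₂ w)), ← e2, neg_neg, Finset.sum_comm]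
    refine Finset.sum_congr rfl fun v _ => ?_
    rw [← Finset.sum_mul, ← Finset.sum_mul, s1, one_mul]
  have Sn : ∑ x : G × G × K, auxq n q₁ q₂ x * Real.logb 2 (1 / n) = - Real.logb 2 n := by
    rw [← Finset.sum_mul, S1, one_div, Real.logb_inv, one_mul]
  have Suw : ∑ x : G × G × K, auxq n q₁ q₂ x * Real.logb 2 (1 / n * q₂ x.2.2)
      = - (Real.logb 2 n + c) := by
    rw [neg_add, ← Sn, ← Sw, ← Finset.sum_add_distrib]
    refine Finset.sum_congr rfl fun x _ => ?_
    by_cases h : q₂ x.2.2 = 0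
    · simp [auxq, h]
    · rw [Real.logb_mul (one_div_ne_zero hnR) h]; ring
  have Sf : ∑ x : G × G × K, auxq n q₁ q₂ x * Real.logb 2 (auxq n q₁ q₂ x)
      = - (Real.logb 2 n + a + c) := by
    rw [neg_add, neg_add, ← Sn, ← Sw, ← Sv, ← Finset.sum_add_distrib, ← Finset.sum_add_distrib]
    refine Finset.sum_congr rfl fun x _ => ?_
    by_cases h : q₂ x.2.2 = 0
    · simp [auxq, h]
    by_cases h' : q₁ x.2.1 = 0
    · simp [auxq, h']
    · unfold auxq
      rw [Real.logb_mul (mul_ne_zero (one_div_ne_zero hnR) h') h,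
        Real.logb_mul (one_div_ne_zero hnR) h']; ring
  refine ⟨S1, ?_, ?_, ?_, ?_, ?_⟩
  · rw [aux_ent_eq]
    have : ∀ x : G × G × K, pr (auxq n q₁ q₂) (fun x : G × G × K => x) x = auxq n q₁ q₂ x := by
      intro x; simp [pr]
    simp_rw [this]
    rw [Sf, neg_neg]
  · rw [aux_ent_eq]
    have : ∀ u w, pr (auxq n q₁ q₂) (fun x : G × G × K => (x.1, x.2.2)) (u, w)
        = 1 / n * q₂ w := by
      intro u w
      simp only [pr, Fintype.sum_prod_type, Prod.mk.injEq, ite_and]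
      simp only [auxq, Finset.sum_ite_irrel, Finset.sum_const_zero, Finset.sum_ite_eq',
        Finset.mem_univ, if_true]
      rw [← Finset.sum_mul, ← Finset.mul_sum, s1, mul_one]
    simp_rw [this]
    rw [Suw, neg_neg]
  · rw [aux_ent_eq]
    have : ∀ u w, pr (auxq n q₁ q₂) (fun x : G × G × K => (x.1 + x.2.1, x.2.2)) (u, w)
        = 1 / n * q₂ w := by
      intro u w
      simp only [pr, Fintype.sum_prod_type, Prod.mk.injEq, ite_and, ← eq_sub_iff_add_eq]
      rw [Finset.sum_comm]
      simp only [auxq, Finset.sum_ite_irrel, Finset.sum_const_zero, Finset.sum_ite_eq',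
        Finset.mem_univ, if_true]
      rw [← Finset.sum_mul, ← Finset.mul_sum, s1, mul_one]
    simp_rw [this]
    rw [Suw, neg_neg]
  · rw [aux_ent_eq]
    have : ∀ v, pr (auxq n q₁ q₂) (fun x : G × G × K => x.2.1) v = q₁ v := by
      intro v
      have := auxq_sum n hn q₁ q₂ (fun v' _ => if v' = v then 1 else 0)
      simp only [mul_ite, mul_one, mul_zero] at this
      unfold pr
      rw [this]
      simp only [Finset.sum_ite_irrel, Finset.sum_const_zero, Finset.sum_ite_eq',
        Finset.mem_univ, if_true, ← Finset.mul_sum, s2, mul_one]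
    simp_rw [this]
    rw [Sv, neg_neg]
  · rw [aux_ent_eq]
    simp [pr, S1]

end construction

lemma aux_rk2 (A : Finset (Fin 4)) : rkU 2 ({0,1,2} : Finset (Fin 4)) A =
    min 2 ((if (0 : Fin 4) ∈ A then 1 else 0) + ((if (1 : Fin 4) ∈ A then 1 else 0) +
      (if (2 : Fin 4) ∈ A then 1 else 0))) := by
  have : A ∩ {0,1,2} = ({0,1,2} : Finset (Fin 4)).filter (· ∈ A) := by
    ext x; simp [and_comm]
  unfold rkU
  rw [this, Finset.card_filter, Finset.sum_insert (by decide), Finset.sum_insert (by decide),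
    Finset.sum_singleton]
  push_cast
  rfl

lemma aux_rk1 (A : Finset (Fin 4)) : rkU 1 ({0,1} : Finset (Fin 4)) A =
    min 1 ((if (0 : Fin 4) ∈ A then 1 else 0) + (if (1 : Fin 4) ∈ A then 1 else 0)) := by
  have : A ∩ {0,1} = ({0,1} : Finset (Fin 4)).filter (· ∈ A) := by
    ext x; simp [and_comm]
  unfold rkU
  rw [this, Finset.card_filter, Finset.sum_insert (by decide), Finset.sum_singleton]
  push_cast
  rfl

/-- Theorem 2 for the face (U^{123}_{2,3}, U^{12}_{1,2}):
h = a·r₁ + b·r₂ (a, b ≥ 0) is entropic iff a + b ≥ log₂⌈2^a⌉. -/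
theorem face_U123_23_U12_12 (a b : ℝ) (ha : 0 ≤ a) (hb : 0 ≤ b) :
    IsEntropic 4
      (fun A => a * rkU 2 ({0,1,2} : Finset (Fin 4)) A +
                b * rkU 1 ({0,1} : Finset (Fin 4)) A)
    ↔ Real.logb 2 ((⌈(2 : ℝ) ^ a⌉ : ℤ) : ℝ) ≤ a + b := by
  simp_rw [aux_rk2, aux_rk1]
  constructor
  · rintro ⟨m, p, hp, h1, hh⟩
    refine aux_necessity p hp h1 (fun x => x 0) (fun x => x 1) (fun x => x 2) a b
      ?_ ?_ ?_ ?_ ?_ ?_ ?_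
    · rw [aux_ent_congr p _ (fun x (i : ({0} : Finset (Fin 4))) => x i.1)
        (by intro x y; simp [funext_iff]), ← hh]
      norm_num [Fin.ext_iff]
    · rw [aux_ent_congr p _ (fun x (i : ({1} : Finset (Fin 4))) => x i.1)
        (by intro x y; simp [funext_iff]), ← hh]
      norm_num [Fin.ext_iff]
    · rw [aux_ent_congr p _ (fun x (i : ({2} : Finset (Fin 4))) => x i.1)
        (by intro x y; simp [funext_iff]), ← hh]
      norm_num [Fin.ext_iff]
    · rw [aux_ent_congr p _ (fun x (i : ({0, 1} : Finset (Fin 4))) => x i.1)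
        (by intro x y; simp [funext_iff]), ← hh]
      norm_num [Fin.ext_iff]
      try ring
    · rw [aux_ent_congr p _ (fun x (i : ({0, 2} : Finset (Fin 4))) => x i.1)
        (by intro x y; simp [funext_iff]), ← hh]
      norm_num [Fin.ext_iff]
      try ring
    · rw [aux_ent_congr p _ (fun x (i : ({1, 2} : Finset (Fin 4))) => x i.1)
        (by intro x y; simp [funext_iff]), ← hh]
      norm_num [Fin.ext_iff]
      try ring
    · rw [aux_ent_congr p _ (fun x (i : ({0, 1, 2} : Finset (Fin 4))) => x i.1)
        (by intro x y; simp [funext_iff]), ← hh]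
      norm_num [Fin.ext_iff]
      try ring
  · intro hab
    have hpos : 0 < ⌈(2 : ℝ) ^ a⌉ := Int.ceil_pos.2 (by positivity)
    obtain ⟨n, hn⟩ := Int.eq_ofNat_of_zero_le hpos.le
    have hle := Int.le_ceil ((2 : ℝ) ^ a)
    rw [hn] at hab hpos hle
    have hn0 : 0 < n := by exact_mod_cast hpos
    have : NeZero n := ⟨hn0.ne'⟩
    simp only [Int.cast_natCast] at hab hle
    have hnR : (0 : ℝ) < n := by exact_mod_cast hn0
    have han : a ≤ Real.logb 2 n := by
      rwa [Real.le_logb_iff_rpow_le (by norm_num) hnR]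
    obtain ⟨M, hM⟩ := exists_nat_ge ((2 : ℝ) ^ (a + b - Real.logb 2 n))
    have hM0 : (0 : ℝ) < M := lt_of_lt_of_le (by positivity) hM
    have hM0' : 0 < M := by exact_mod_cast hM0
    have hMc : a + b - Real.logb 2 n ≤ Real.logb 2 M := by
      rwa [Real.le_logb_iff_rpow_le (by norm_num) hM0]
    obtain ⟨q₁, hq₁, s1, e1⟩ := aux_exists_dist (ZMod n) 0 n (ZMod.card n) a ha han
    obtain ⟨q₂, hq₂, s2, e2⟩ := aux_exists_dist (Fin M) ⟨0, hM0'⟩ M (Fintype.card_fin M)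
      (a + b - Real.logb 2 n) (by linarith) hMc
    obtain ⟨S, E3, E0, E1, E2, Ec⟩ := auxq_ents n (ZMod.card n) q₁ q₂ s1 s2 _ _ e1 e2
    let w0 : Fin M := ⟨0, hM0'⟩
    let Y : Fin 4 → ZMod n × ZMod n × Fin M → ZMod n × ZMod n × Fin M :=
      ![fun x => (x.1, 0, x.2.2), fun x => (x.1 + x.2.1, 0, x.2.2), fun x => (0, x.2.1, w0),
        fun _ => (0, 0, w0)]
    refine aux_entropic 4 (auxq n q₁ q₂) ?_ S Y _ fun A => ?_
    · intro x
      have := hq₁ x.2.1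
      have := hq₂ x.2.2
      unfold auxq
      positivity
    have hker : ∀ x y : ZMod n × ZMod n × Fin M,
        ((fun i : A => Y i.1 x) = fun i : A => Y i.1 y) ↔
        ((0 : Fin 4) ∈ A → x.1 = y.1 ∧ x.2.2 = y.2.2) ∧
        ((1 : Fin 4) ∈ A → x.1 + x.2.1 = y.1 + y.2.1 ∧ x.2.2 = y.2.2) ∧
        ((2 : Fin 4) ∈ A → x.2.1 = y.2.1) := by
      intro x y
      rw [funext_iff]
      simp only [Subtype.forall, Fin.forall_fin_succ]
      simp [Y]
    by_cases h0 : (0 : Fin 4) ∈ A <;> by_cases h1 : (1 : Fin 4) ∈ A <;>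
      by_cases h2 : (2 : Fin 4) ∈ A <;> simp only [h0, h1, h2, true_imp_iff, false_imp_iff,
        if_true, if_false, and_true, true_and] at hker ⊢
    · rw [aux_ent_congr _ _ (fun x => x) (fun x y => (hker x y).trans ?_), E3]
      · norm_num
        try ring
      · simp only [Prod.ext_iff]
        grind
    · rw [aux_ent_congr _ _ (fun x => x) (fun x y => (hker x y).trans ?_), E3]
      · norm_num
        try ring
      · simp only [Prod.ext_iff]
        grind
    · rw [aux_ent_congr _ _ (fun x => x) (fun x y => (hker x y).trans ?_), E3]
      · norm_num
        try ring
      · simp only [Prod.ext_iff]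
        grind
    · rw [aux_ent_congr _ _ (fun x => (x.1, x.2.2)) (fun x y => (hker x y).trans ?_), E0]
      · norm_num
      · simp
    · rw [aux_ent_congr _ _ (fun x => x) (fun x y => (hker x y).trans ?_), E3]
      · norm_num
        try ring
      · simp only [Prod.ext_iff]
        grind
    · rw [aux_ent_congr _ _ (fun x => (x.1 + x.2.1, x.2.2)) (fun x y => (hker x y).trans ?_), E1]
      · norm_num
      · simp
    · rw [aux_ent_congr _ _ (fun x => x.2.1) (fun x y => (hker x y).trans ?_), E2]
      · norm_num
      · simp
    · rw [aux_ent_congr _ _ (fun _ => ()) (fun x y => (hker x y).trans ?_), Ec]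
      · norm_num
      · simp
end
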